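/- The k-dimensional skeleton of the normal fan of a rational full-dimensional polytope P ⊂ ℝ^n is k-connected through codimension one: its facet-ridge hypergraph (cones of dimension k as vertices, cones of dimension k-1 as hyperedges) remains connected after removing any k-1 of its k-dimensional cones. -/

import Mathlib

/-- A polyhedron: a finite intersection of affine halfspaces in `ℝ^n`. -/
def IsPolyhedron {n : ℕ} (P : Set (Fin n → ℝ)) : Prop :=
  ∃ s : Finset ((Fin n → ℝ) × ℝ), P = {x | ∀ p ∈ s, ∑ i, p.1 i * x i ≤ p.2}

/-- A rational polyhedron: cut out by finitely many rational affine halfspaces. -/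
def IsRationalPolyhedron {n : ℕ} (P : Set (Fin n → ℝ)) : Prop :=
  ∃ s : Finset ((Fin n → ℚ) × ℚ), P = {x | ∀ p ∈ s, ∑ i, (p.1 i : ℝ) * x i ≤ (p.2 : ℝ)}

/-- Dimension of a subset of `ℝ^n`: the dimension of its affine span. -/
noncomputable def polyDim {n : ℕ} (P : Set (Fin n → ℝ)) : ℕ :=
  Module.finrank ℝ (vectorSpan ℝ P)

/-- A polyhedral complex in `ℝ^n` (faces are nonempty polyhedra, closed under
nonempty pairwise intersection). -/
structure PolyhedralComplex (n : ℕ) where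
  faces : Set (Set (Fin n → ℝ))
  poly : ∀ P ∈ faces, IsPolyhedron P
  nonempty : ∀ P ∈ faces, P.Nonempty
  inter_mem : ∀ P ∈ faces, ∀ Q ∈ faces, (P ∩ Q).Nonempty → P ∩ Q ∈ faces

namespace PolyhedralComplex

variable {n : ℕ}

/-- The support of a polyhedral complex. -/
def support (C : PolyhedralComplex n) : Set (Fin n → ℝ) := ⋃₀ C.faces

/-- The facets: faces of dimension `d`. -/
def facets (C : PolyhedralComplex n) (d : ℕ) : Set (Set (Fin n → ℝ)) :=
  {P | P ∈ C.faces ∧ polyDim P = d}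

/-- The ridges: faces of dimension `d - 1`. -/
def ridges (C : PolyhedralComplex n) (d : ℕ) : Set (Set (Fin n → ℝ)) :=
  {P | P ∈ C.faces ∧ polyDim P = d - 1}

/-- Pure of dimension `d`: every face is contained in a `d`-dimensional face. -/
def IsPure (C : PolyhedralComplex n) (d : ℕ) : Prop :=
  (∀ P ∈ C.faces, polyDim P ≤ d) ∧ ∀ P ∈ C.faces, ∃ Q ∈ C.facets d, P ⊆ Q

def IsRational (C : PolyhedralComplex n) : Prop := ∀ P ∈ C.faces, IsRationalPolyhedron P

/-- Pointed: no face contains an affine line. -/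
def IsPointed (C : PolyhedralComplex n) : Prop :=
  ∀ P ∈ C.faces, ¬ ∃ (x v : Fin n → ℝ), v ≠ 0 ∧ ∀ t : ℝ, x + t • v ∈ P

/-- Adjacency in the facet-ridge hypergraph after deleting the facets in `G`
(and all hyperedges incident to them). -/
def Adj (C : PolyhedralComplex n) (d : ℕ) (G : Finset (Set (Fin n → ℝ)))
    (P Q : Set (Fin n → ℝ)) : Prop :=
  P ∈ C.facets d ∧ Q ∈ C.facets d ∧ P ∉ G ∧ Q ∉ G ∧
    ∃ R ∈ C.ridges d, R ⊆ P ∧ R ⊆ Q ∧ ∀ F ∈ G, ¬ R ⊆ F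

/-- `k`-connectedness through codimension one of a pure `d`-dimensional complex:
deleting any `k - 1` closed facets leaves the facet-ridge hypergraph connected. -/
def ConnectedThroughCodimOne (C : PolyhedralComplex n) (d k : ℕ) : Prop :=
  ∀ G : Finset (Set (Fin n → ℝ)), ↑G ⊆ C.facets d → G.card < k →
    ∀ P ∈ C.facets d, ∀ Q ∈ C.facets d, P ∉ G → Q ∉ G →
      Relation.ReflTransGen (C.Adj d G) P Q

end PolyhedralComplex

/-- A (nonarchimedean, additively written) real-valued valuation on a field. -/
structure TropValuation (K : Type*) [Field K] where
  val : K → ℝ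
  map_one : val 1 = 0
  map_mul : ∀ x y : K, x ≠ 0 → y ≠ 0 → val (x * y) = val x + val y
  map_add : ∀ x y : K, x ≠ 0 → y ≠ 0 → x + y ≠ 0 → min (val x) (val y) ≤ val (x + y)

/-- The zero set in the torus `(K*)^n` of an ideal of polynomials. -/
def torusZeroSet {K : Type*} [Field K] {n : ℕ} (I : Ideal (MvPolynomial (Fin n) K)) :
    Set (Fin n → Kˣ) :=
  {x | ∀ f ∈ I, MvPolynomial.eval (fun i => (x i : K)) f = 0}

/-- Tropicalization: closure of the coordinatewise valuation image. -/
def tropicalize {K : Type*} [Field K] (w : TropValuation K) {n : ℕ}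
    (X : Set (Fin n → Kˣ)) : Set (Fin n → ℝ) :=
  closure {p : Fin n → ℝ | ∃ x ∈ X, ∀ i, p i = w.val ((x i : K))}

/-- `S` is the tropicalization of an irreducible subvariety of the torus `(K*)^n`. -/
def IsTropOfIrred (K : Type*) [Field K] (w : TropValuation K) {n : ℕ}
    (S : Set (Fin n → ℝ)) : Prop :=
  ∃ I : Ideal (MvPolynomial (Fin n) K), I.IsPrime ∧ S = tropicalize w (torusZeroSet I)

/-- The vanishing ideal of a subset of the torus `(K*)^n`. -/
def vanishingIdeal {K : Type*} [Field K] {n : ℕ} (S : Set (Fin n → Kˣ)) :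
    Ideal (MvPolynomial (Fin n) K) where
  carrier := {f | ∀ x ∈ S, MvPolynomial.eval (fun i => (x i : K)) f = 0}
  add_mem' := by
    intro a b ha hb x hx
    simp [map_add, ha x hx, hb x hx]
  zero_mem' := by intro x hx; simp
  smul_mem' := by
    intro c f hf x hx
    simp [smul_eq_mul, map_mul, hf x hx]

/-- The affine hyperplane with normal vector `a` and level `b`. -/
def hplane {n : ℕ} (a : Fin n → ℝ) (b : ℝ) : Set (Fin n → ℝ) := {x | ∑ i, a i * x i = b}

/-- The ray spanned by a vector. -/
def ray {n : ℕ} (u : Fin n → ℝ) : Set (Fin n → ℝ) := {x | ∃ t : ℝ, 0 ≤ t ∧ x = t • u}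

/-- The cone spanned by two vectors. -/
def cone2 {n : ℕ} (u v : Fin n → ℝ) : Set (Fin n → ℝ) :=
  {x | ∃ s t : ℝ, 0 ≤ s ∧ 0 ≤ t ∧ x = s • u + t • v}

def IsIntVec {n : ℕ} (v : Fin n → ℝ) : Prop := ∀ i, ∃ k : ℤ, v i = (k : ℝ)

def IsPrimitiveVec {n : ℕ} (v : Fin n → ℝ) : Prop :=
  IsIntVec v ∧ v ≠ 0 ∧ ∀ (k : ℕ) (w : Fin n → ℝ), IsIntVec w → v = (k : ℝ) • w → k = 1

/-- Primitive integer vector modulo the subspace `W`. -/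
def PrimitiveMod {n : ℕ} (W : Submodule ℝ (Fin n → ℝ)) (v : Fin n → ℝ) : Prop :=
  IsIntVec v ∧ v ∉ W ∧
    ∀ m : ℕ, 2 ≤ m → ∀ w : Fin n → ℝ, IsIntVec w → v - (m : ℝ) • w ∈ W → w ∈ W

/-- `v` points from the ridge `τ` into the facet `σ`. -/
def PointsInto {n : ℕ} (τ σ : Set (Fin n → ℝ)) (v : Fin n → ℝ) : Prop :=
  ∃ x ∈ τ, ∃ δ : ℝ, 0 < δ ∧ ∀ t : ℝ, 0 < t → t ≤ δ → x + t • v ∈ σ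

/-- The tropical balancing condition with weights `m` at every ridge. -/
def PolyhedralComplex.IsBalanced {n : ℕ} (C : PolyhedralComplex n) (d : ℕ)
    (m : Set (Fin n → ℝ) → ℕ) : Prop :=
  (∀ σ ∈ C.facets d, 0 < m σ) ∧
  ∀ τ ∈ C.ridges d, ∃ (S : Finset (Set (Fin n → ℝ))) (v : Set (Fin n → ℝ) → (Fin n → ℝ)),
    (↑S = {σ | σ ∈ C.facets d ∧ τ ⊆ σ}) ∧
    (∀ σ ∈ S, PrimitiveMod (vectorSpan ℝ τ) (v σ) ∧ v σ ∈ vectorSpan ℝ σ ∧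
      PointsInto τ σ (v σ)) ∧
    (∑ σ ∈ S, (m σ : ℝ) • v σ) ∈ vectorSpan ℝ τ

/-- The face of `P` on which the linear functional `w` is maximized. -/
def maxFace {n : ℕ} (P : Set (Fin n → ℝ)) (w : Fin n → ℝ) : Set (Fin n → ℝ) :=
  {x | x ∈ P ∧ ∀ y ∈ P, ∑ i, w i * y i ≤ ∑ i, w i * x i}

/-- The cone of the normal fan of `P` associated to the face maximizing `w`. -/
def normalFanCone {n : ℕ} (P : Set (Fin n → ℝ)) (w : Fin n → ℝ) : Set (Fin n → ℝ) :=
  {u | maxFace P w ⊆ maxFace P u}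

/-!
Passing to normal cones reverses inclusions of faces, so the cones of dimensions `k` and `k - 1`
are the faces of dimensions `d = n - k` and `d + 1`. One has to connect the `d`-faces that remain
after a deletion through `(d + 1)`-faces that contain no deleted face.

Induct over the faces `s` of dimension `d + 1 + m` that contain at most `m` deleted faces. Fix a
deleted face `X ⊆ s`, or `X = s` if there is none. A facet of `s` that does not contain `X` contains
at most `m - 1` deleted faces, so the induction hypothesis applies to it, and every remaining
`d`-face of `s` lies on such a facet. These facets are the vertices of the polyhedron polar to `s`
with respect to the centroid of `X`, and the simplex method connects them along its edges. Two
facets joined by an edge meet in a face of dimension `d + (m - 1)` with at most `m - 1` deleted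
faces, which still contains a remaining `d`-face.
-/

open Module Submodule
open scoped Finset

section LinearInequalities

variable {𝕜 E ι : Type*} [Field 𝕜] [LinearOrder 𝕜]
  [AddCommGroup E] [Module 𝕜 E] {s : Finset ι} {g : ι → E} {p : ι → 𝕜} {α β z : Dual 𝕜 E}

/-- Feasible points of the system of linear inequalities `α (g i) ≤ p i`, `i ∈ s`, in the dual
space: they form the polyhedron on which the simplex method is run. -/
def IsFeasible (s : Finset ι) (g : ι → E) (p : ι → 𝕜) (α : Dual 𝕜 E) : Prop :=
  ∀ i ∈ s, α (g i) ≤ p i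

/-- The indices of the inequalities `α (g i) ≤ p i`, `i ∈ s`, that hold with equality at `α`. -/
def tightSet (s : Finset ι) (g : ι → E) (p : ι → 𝕜) (α : Dual 𝕜 E) : Finset ι :=
  {i ∈ s | α (g i) = p i}

theorem mem_tightSet {i : ι} : i ∈ tightSet s g p α ↔ i ∈ s ∧ α (g i) = p i :=
  Finset.mem_filter

theorem tightSet_subset : tightSet s g p α ⊆ s :=
  Finset.filter_subset _ _

theorem span_image_tightSet_le : span 𝕜 (g '' tightSet s g p α) ≤ span 𝕜 (g '' s) :=
  span_mono (Set.image_mono (Finset.coe_subset.2 tightSet_subset))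

theorem span_image_tightSet_zero_le_ker : span 𝕜 (g '' tightSet s g 0 z) ≤ z.ker :=
  span_le.2 (Set.image_subset_iff.2 fun _ hi ↦ (mem_tightSet.1 hi).2)

theorem tightSet_inter_tightSet_add_smul [DecidableEq ι] {r : 𝕜} (hr : r ≠ 0) :
    tightSet s g p α ∩ tightSet s g p (α + r • z) = tightSet (tightSet s g p α) g 0 z := by
  ext i
  simp only [Finset.mem_inter, mem_tightSet, LinearMap.add_apply, LinearMap.smul_apply,
    smul_eq_mul, Pi.zero_apply]
  constructor
  · rintro ⟨⟨hi, hα⟩, -, hγ⟩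
    exact ⟨⟨hi, hα⟩, by simpa [hα, hr] using hγ⟩
  · rintro ⟨⟨hi, hα⟩, hz⟩
    exact ⟨⟨hi, hα⟩, hi, by simp [hα, hz]⟩

/-- Index sets of the inequalities that are tight at a vertex of the polyhedron `IsFeasible s g p`.
A vertex is a feasible point whose tight inequalities have maximal rank; since a lineality space is
allowed, it is recorded by its tight set. -/
def IsVertexSet (s : Finset ι) (g : ι → E) (p : ι → 𝕜) (A : Finset ι) : Prop :=
  ∃ α : Dual 𝕜 E, IsFeasible s g p α ∧ A = tightSet s g p α ∧
    span 𝕜 (g '' A) = span 𝕜 (g '' s)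

/-- Adjacency of vertices of the polyhedron `IsFeasible s g p` along an edge. -/
def VertexSetAdj [DecidableEq ι] (s : Finset ι) (g : ι → E) (p : ι → 𝕜) (A B : Finset ι) : Prop :=
  IsVertexSet s g p A ∧ IsVertexSet s g p B ∧
    finrank 𝕜 (span 𝕜 (g '' (A ∩ B : Finset ι))) + 1 = finrank 𝕜 (span 𝕜 (g '' s))

theorem map_eq_of_tightSet_subset {c : E} (h : tightSet s g p α ⊆ tightSet s g p β)
    (hc : c ∈ span 𝕜 (g '' tightSet s g p α)) : α c = β c := by
  refine LinearMap.eqOn_span (Set.forall_mem_image.2 fun i hi ↦ ?_) hc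
  rw [(mem_tightSet.1 hi).2, (mem_tightSet.1 (h hi)).2]

theorem tightSet_eq_of_subset (h : tightSet s g p α ⊆ tightSet s g p β)
    (hspan : span 𝕜 (g '' tightSet s g p α) = span 𝕜 (g '' s)) :
    tightSet s g p α = tightSet s g p β := by
  refine h.antisymm fun i hi ↦ mem_tightSet.2 ⟨tightSet_subset hi, ?_⟩
  rw [← (mem_tightSet.1 hi).2]
  exact map_eq_of_tightSet_subset h
    (hspan ▸ subset_span (Set.mem_image_of_mem g (tightSet_subset hi)))

variable [IsStrictOrderedRing 𝕜]

theorem map_sum_tightSet_lt (hα : IsFeasible s g p α)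
    (h : ¬ tightSet s g p β ⊆ tightSet s g p α) :
    α (∑ i ∈ tightSet s g p β, g i) < β (∑ i ∈ tightSet s g p β, g i) := by
  obtain ⟨i, hi, hiα⟩ := Finset.not_subset.1 h
  have his := tightSet_subset hi
  simp only [map_sum]
  refine Finset.sum_lt_sum
    (fun j hj ↦ (mem_tightSet.1 hj).2.symm ▸ hα j (tightSet_subset hj)) ⟨i, hi, ?_⟩
  rw [(mem_tightSet.1 hi).2]
  exact (hα i his).lt_of_ne fun heq ↦ hiα (mem_tightSet.2 ⟨his, heq⟩)

theorem IsFeasible.exists_add_smul (hα : IsFeasible s g p α) (hz : ∃ i ∈ s, 0 < z (g i)) :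
    ∃ t : 𝕜, 0 ≤ t ∧ IsFeasible s g p (α + t • z) ∧
      ∃ i ∈ tightSet s g p (α + t • z), 0 < z (g i) := by
  obtain ⟨j, hj, hzj⟩ := hz
  obtain ⟨i, hi, hmin⟩ := {i ∈ s | 0 < z (g i)}.exists_min_image
    (fun i ↦ (p i - α (g i)) / z (g i)) ⟨j, Finset.mem_filter.2 ⟨hj, hzj⟩⟩
  obtain ⟨his, hzi⟩ := Finset.mem_filter.1 hi
  have ht : 0 ≤ (p i - α (g i)) / z (g i) := div_nonneg (sub_nonneg.2 (hα i his)) hzi.le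
  -- Ratio test: the least ratio is the longest step along `z` that stays feasible.
  refine ⟨_, ht, fun k hk ↦ ?_, i, mem_tightSet.2 ⟨his, ?_⟩, hzi⟩
  · simp only [LinearMap.add_apply, LinearMap.smul_apply, smul_eq_mul]
    rcases lt_or_ge 0 (z (g k)) with hzk | hzk
    · linarith [(le_div_iff₀ hzk).1 (hmin k (Finset.mem_filter.2 ⟨hk, hzk⟩))]
    · linarith [mul_nonpos_of_nonneg_of_nonpos ht hzk, hα k hk]
  · simp [div_mul_cancel₀ _ hzi.ne']

variable [FiniteDimensional 𝕜 E]

theorem IsFeasible.exists_tightSet_ssubset {c : E} (hα : IsFeasible s g p α)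
    (h : finrank 𝕜 (span 𝕜 (g '' tightSet s g p α)) + 1 < finrank 𝕜 (span 𝕜 (g '' s))) :
    ∃ β, IsFeasible s g p β ∧ β c = α c ∧ tightSet s g p α ⊂ tightSet s g p β := by
  set T := span 𝕜 (g '' tightSet s g p α)
  obtain ⟨i, hi, hiT⟩ : ∃ i ∈ s, g i ∉ T ⊔ 𝕜 ∙ c := by
    by_contra! hle
    have hs : span 𝕜 (g '' s) ≤ T ⊔ 𝕜 ∙ c := span_le.2 (Set.image_subset_iff.2 hle)
    have := finrank_mono hs
    have := finrank_add_le_finrank_add_finrank T (𝕜 ∙ c)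
    have := finrank_span_le_card (R := 𝕜) ({c} : Set E)
    simp only [Set.toFinset_singleton, Finset.card_singleton] at this
    lia
  obtain ⟨y, hyi, hker⟩ := exists_le_ker_of_notMem hiT
  obtain ⟨z, hzi, hker⟩ : ∃ z : Dual 𝕜 E, 0 < z (g i) ∧ T ⊔ 𝕜 ∙ c ≤ z.ker := by
    rcases hyi.lt_or_gt with hy | hy
    · exact ⟨-y, by simpa using hy, fun v hv ↦ by simpa using hker hv⟩
    · exact ⟨y, hy, hker⟩
  have hzT : ∀ j ∈ tightSet s g p α, z (g j) = 0 := fun j hj ↦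
    hker (mem_sup_left (subset_span (Set.mem_image_of_mem g hj)))
  have hzc : z c = 0 := hker (mem_sup_right (mem_span_singleton_self c))
  obtain ⟨t, -, hfeas, j, hj, hzj⟩ := hα.exists_add_smul ⟨i, hi, hzi⟩
  refine ⟨α + t • z, hfeas, by simp [hzc], fun k hk ↦ ?_, fun hsub ↦ hzj.ne' (hzT j (hsub hj))⟩
  have hk' := mem_tightSet.1 hk
  exact mem_tightSet.2 ⟨hk'.1, by simp [hk'.2, hzT k hk]⟩

/-- A maximal tight set gives an extreme ray of the cone, modulo its lineality space. -/
theorem exists_finrank_span_tightSet_add_one {c : E} (hc : c ∈ span 𝕜 (g '' s))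
    (hα : IsFeasible s g 0 α) (hαc : 0 < α c) :
    ∃ z : Dual 𝕜 E, IsFeasible s g 0 z ∧ 0 < z c ∧ tightSet s g 0 α ⊆ tightSet s g 0 z ∧
      finrank 𝕜 (span 𝕜 (g '' tightSet s g 0 z)) + 1 = finrank 𝕜 (span 𝕜 (g '' s)) := by
  obtain ⟨z, ⟨hz, hzc, hsub⟩, hmax⟩ := Set.Finite.exists_maximalFor'
    (fun z : Dual 𝕜 E ↦ tightSet s g 0 z)
    {z | IsFeasible s g 0 z ∧ 0 < z c ∧ tightSet s g 0 α ⊆ tightSet s g 0 z}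
    (s.powerset.finite_toSet.subset
      (Set.image_subset_iff.2 fun z _ ↦ Finset.mem_powerset.2 tightSet_subset))
    ⟨α, hα, hαc, subset_rfl⟩
  refine ⟨z, hz, hzc, hsub, le_antisymm ?_ ?_⟩
  · refine finrank_lt_finrank_of_lt (lt_of_le_not_ge span_image_tightSet_le fun hle ↦ hzc.ne' ?_)
    exact span_image_tightSet_zero_le_ker (hle hc)
  · by_contra! hlt
    obtain ⟨y, hy, hyc, hzy⟩ := hz.exists_tightSet_ssubset (c := c) hlt
    exact hzy.not_ge (hmax ⟨hy, hyc ▸ hzc, hsub.trans hzy.le⟩ hzy.le)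

/-- Pivot along an extreme ray of the cone of feasible directions at `α`. -/
theorem exists_vertexSetAdj_lt [DecidableEq ι] {t : Finset ι} (hα : IsFeasible s g p α)
    (hspan : span 𝕜 (g '' tightSet s g p α) = span 𝕜 (g '' s)) (hβ : IsFeasible s g p β)
    (hts : t ⊆ s) (hlt : α (∑ i ∈ t, g i) < β (∑ i ∈ t, g i)) :
    ∃ γ, IsFeasible s g p γ ∧ α (∑ i ∈ t, g i) < γ (∑ i ∈ t, g i) ∧
      VertexSetAdj s g p (tightSet s g p α) (tightSet s g p γ) := by
  set A := tightSet s g p α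
  have hβα : IsFeasible A g 0 (β - α) := fun i hi ↦ by
    simpa [(mem_tightSet.1 hi).2] using hβ i (tightSet_subset hi)
  have hc : ∑ i ∈ t, g i ∈ span 𝕜 (g '' A) :=
    hspan ▸ sum_mem fun i hi ↦ subset_span (Set.mem_image_of_mem g (hts hi))
  obtain ⟨z, hz, hzc, -, hrank⟩ :=
    exists_finrank_span_tightSet_add_one hc hβα (by simpa using hlt)
  rw [hspan] at hrank
  obtain ⟨j, hj, hzj⟩ : ∃ j ∈ t, 0 < z (g j) :=
    Finset.exists_lt_of_sum_lt (f := 0) (by simpa using hzc)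
  obtain ⟨r, hr, hγ, i, hi, hzi⟩ := hα.exists_add_smul ⟨j, hts hj, hzj⟩
  have hr : 0 < r := hr.lt_of_ne fun h ↦ (hz i (by simpa [← h] using hi)).not_gt hzi
  set B := tightSet s g p (α + r • z)
  have hinter : A ∩ B = tightSet A g 0 z := tightSet_inter_tightSet_add_smul hr.ne'
  have hspanB : span 𝕜 (g '' B) = span 𝕜 (g '' s) := by
    refine eq_of_le_of_finrank_le span_image_tightSet_le ?_
    rw [← hrank, ← hinter]
    refine finrank_lt_finrank_of_lt (lt_of_le_not_ge
      (span_mono (Set.image_mono (Finset.coe_subset.2 Finset.inter_subset_right))) fun hle ↦ ?_)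
    exact hzi.ne' (span_image_tightSet_zero_le_ker
      (hinter ▸ hle (subset_span (Set.mem_image_of_mem g hi))))
  refine ⟨α + r • z, hγ, ?_, ⟨α, hα, rfl, hspan⟩, ⟨_, hγ, rfl, hspanB⟩, hinter ▸ hrank⟩
  simpa only [LinearMap.add_apply, LinearMap.smul_apply, smul_eq_mul, lt_add_iff_pos_right]
    using mul_pos hr hzc

/-- The simplex method, run with the objective `∑ i ∈ B, g i`, ends at the vertex `B`. -/
theorem IsVertexSet.reflTransGen_vertexSetAdj [DecidableEq ι] {A B : Finset ι}
    (hA : IsVertexSet s g p A) (hB : IsVertexSet s g p B) :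
    Relation.ReflTransGen (VertexSetAdj s g p) A B := by
  obtain ⟨β, hβ, rfl, hspanβ⟩ := hB
  set t := tightSet s g p β with ht
  have hreach : ∀ C, Relation.ReflTransGen (VertexSetAdj s g p) A C → IsVertexSet s g p C :=
    fun C hC ↦ hC.cases_tail.elim (· ▸ hA) fun ⟨_, _, hadj⟩ ↦ hadj.2.1
  choose! γ hγ htight hspan using hreach
  obtain ⟨C, hC, hmax⟩ := Set.Finite.exists_maximalFor (fun C ↦ γ C (∑ i ∈ t, g i))
    {C | Relation.ReflTransGen (VertexSetAdj s g p) A C}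
    (s.powerset.finite_toSet.subset fun C hC ↦
      Finset.mem_powerset.2 (htight C hC ▸ tightSet_subset)) ⟨A, .refl⟩
  have hsub : t ⊆ tightSet s g p (γ C) := by
    by_contra hnot
    obtain ⟨δ, -, hlt, hadj⟩ := exists_vertexSetAdj_lt (hγ C hC) (htight C hC ▸ hspan C hC) hβ
      tightSet_subset (map_sum_tightSet_lt (hγ C hC) hnot)
    set D := tightSet s g p δ with hD
    have hCD : Relation.ReflTransGen (VertexSetAdj s g p) A D :=
      hC.tail ((htight C hC).symm ▸ hadj)
    have hδ : δ (∑ i ∈ t, g i) = γ D (∑ i ∈ t, g i) := by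
      refine map_eq_of_tightSet_subset (htight D hCD).le ?_
      rw [← hD, hspan D hCD]
      exact sum_mem fun i hi ↦ subset_span (Set.mem_image_of_mem g (tightSet_subset hi))
    exact ((hδ ▸ hlt).trans_le (hmax hCD (hδ ▸ hlt).le)).false
  rwa [ht, tightSet_eq_of_subset hsub hspanβ, ← htight C hC]

end LinearInequalities

section AffineDimension

variable {𝕜 E : Type*} [Field 𝕜] [AddCommGroup E] [Module 𝕜 E] {x : E} {S : Set E} {α : Dual 𝕜 E}

/-- The dimension of the polytope spanned by `A`; it is `0` when `A` is empty. -/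
noncomputable def affineDim (𝕜 : Type*) {E : Type*} [Field 𝕜] [AddCommGroup E] [Module 𝕜 E]
    (A : Finset E) : ℕ :=
  finrank 𝕜 (vectorSpan 𝕜 (A : Set E))

theorem vectorSpan_le_ker_iff :
    vectorSpan 𝕜 S ≤ α.ker ↔ ∀ v ∈ S, ∀ w ∈ S, α v = α w := by
  simp only [vectorSpan_def, span_le, Set.vsub_subset_iff, vsub_eq_sub, SetLike.mem_coe,
    LinearMap.mem_ker, map_sub, sub_eq_zero]

theorem span_image_sub_eq_vectorSpan_insert (x : E) (S : Set E) :
    span 𝕜 ((· - x) '' S) = vectorSpan 𝕜 (insert x S) := by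
  rw [vectorSpan_eq_span_vsub_set_right 𝕜 (Set.mem_insert x S)]
  simp [Set.image_insert_eq]

theorem span_image_sub_eq_vectorSpan (hx : x ∈ affineSpan 𝕜 S) :
    span 𝕜 ((· - x) '' S) = vectorSpan 𝕜 S := by
  rw [span_image_sub_eq_vectorSpan_insert, vectorSpan_insert_eq_vectorSpan hx]

theorem finrank_span_image_sub_eq_affineDim_add_one [FiniteDimensional 𝕜 E] {A : Finset E}
    (hA : A.Nonempty) (hα : ∀ v ∈ A, α (v - x) = 1) :
    finrank 𝕜 (span 𝕜 ((· - x) '' (A : Set E))) = affineDim 𝕜 A + 1 := by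
  obtain ⟨u, hu⟩ := hA
  have hker : vectorSpan 𝕜 (A : Set E) ≤ α.ker := vectorSpan_le_ker_iff.2 fun v hv w hw ↦ by
    simpa using (hα v hv).trans (hα w hw).symm
  have hnot : x - u ∉ vectorSpan 𝕜 (A : Set E) := fun h ↦ by
    have hzero : α (x - u) = 0 := hker h
    rw [← neg_sub, map_neg, hα u hu] at hzero
    exact neg_ne_zero.2 one_ne_zero hzero
  rw [span_image_sub_eq_vectorSpan_insert, ← direction_affineSpan, ← affineSpan_insert_affineSpan,
    AffineSubspace.direction_affineSpan_insert (mem_affineSpan 𝕜 hu), direction_affineSpan,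
    sup_comm, vsub_eq_sub, finrank_sup_span_singleton hnot, affineDim]

end AffineDimension

section Centroid

variable {𝕜 E : Type*} [Field 𝕜] [CharZero 𝕜] [AddCommGroup E] [Module 𝕜 E] {s X : Finset E}

theorem sum_sub_centroid (hX : X.Nonempty) : ∑ v ∈ X, (v - X.centroid 𝕜 id) = 0 := by
  have hcard : (X.card : 𝕜) ≠ 0 := Nat.cast_ne_zero.2 hX.card_ne_zero
  rw [Finset.sum_sub_distrib, Finset.sum_const, Finset.centroid_def,
    Finset.affineCombination_eq_linear_combination _ _ _
      (X.sum_centroidWeights_eq_one_of_nonempty 𝕜 hX)]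
  simp only [Finset.centroidWeights_apply, id_eq]
  rw [← Finset.smul_sum, ← Nat.cast_smul_eq_nsmul 𝕜, smul_inv_smul₀ hcard, sub_self]

theorem centroid_mem_affineSpan_of_subset (hX : X.Nonempty) (hXs : X ⊆ s) :
    X.centroid 𝕜 id ∈ affineSpan 𝕜 (s : Set E) := by
  have h := affineCombination_mem_affineSpan_image (s' := (s : Set E))
    (X.sum_centroidWeights_eq_one_of_nonempty 𝕜 hX) (fun _ hv hvs ↦ (hvs (hXs hv)).elim) id
  rwa [Set.image_id] at h

theorem not_forall_apply_sub_centroid_eq_one (hX : X.Nonempty) (α : Dual 𝕜 E) :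
    ¬ ∀ v ∈ X, α (v - X.centroid 𝕜 id) = 1 := fun h ↦ by
  have hsum := congrArg α (sum_sub_centroid (𝕜 := 𝕜) hX)
  rw [map_sum, map_zero, Finset.sum_congr rfl h, Finset.sum_const, nsmul_one] at hsum
  exact Nat.cast_ne_zero.2 hX.card_ne_zero hsum

end Centroid

section Faces

variable {𝕜 E : Type*} [Field 𝕜] [LinearOrder 𝕜] [AddCommGroup E] [Module 𝕜 E]
  {V s A B : Finset E} {f g : Dual 𝕜 E}

/-- The points of `V` on which `f` is maximal: the vertices and other given points on a face of the
polytope spanned by `V`. -/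
def exposedFace (V : Finset E) (f : Dual 𝕜 E) : Finset E :=
  {v ∈ V | ∀ w ∈ V, f w ≤ f v}

variable (𝕜) in
/-- Nonempty faces of the polytope spanned by `V`, encoded by the points of `V` they contain. -/
def IsFace (V A : Finset E) : Prop :=
  A.Nonempty ∧ ∃ f : Dual 𝕜 E, A = exposedFace V f

theorem mem_exposedFace {v : E} : v ∈ exposedFace V f ↔ v ∈ V ∧ ∀ w ∈ V, f w ≤ f v :=
  Finset.mem_filter

theorem exposedFace_subset : exposedFace V f ⊆ V :=
  Finset.filter_subset _ _

theorem exposedFace_nonempty (hV : V.Nonempty) (f : Dual 𝕜 E) : (exposedFace V f).Nonempty := by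
  obtain ⟨v, hv, hmax⟩ := V.exists_max_image f hV
  exact ⟨v, mem_exposedFace.2 ⟨hv, hmax⟩⟩

theorem isFace_exposedFace (hV : V.Nonempty) (f : Dual 𝕜 E) : IsFace 𝕜 V (exposedFace V f) :=
  ⟨exposedFace_nonempty hV f, f, rfl⟩

theorem isFace_self (hV : V.Nonempty) : IsFace 𝕜 V V :=
  ⟨hV, 0, by simp [exposedFace]⟩

theorem IsFace.subset (hA : IsFace 𝕜 V A) : A ⊆ V := by
  obtain ⟨-, f, rfl⟩ := hA
  exact exposedFace_subset

theorem apply_eq_of_mem_exposedFace {v w : E} (hv : v ∈ exposedFace V f)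
    (hw : w ∈ exposedFace V f) : f v = f w :=
  ((mem_exposedFace.1 hw).2 v (exposedFace_subset hv)).antisymm
    ((mem_exposedFace.1 hv).2 w (exposedFace_subset hw))

theorem mem_exposedFace_iff_eq {v w : E} (hw : w ∈ exposedFace V f) (hv : v ∈ V) :
    v ∈ exposedFace V f ↔ f v = f w :=
  ⟨fun h ↦ apply_eq_of_mem_exposedFace h hw,
    fun h ↦ mem_exposedFace.2 ⟨hv, fun u hu ↦ h ▸ (mem_exposedFace.1 hw).2 u hu⟩⟩

theorem IsFace.of_subset (hA : IsFace 𝕜 V A) (hAs : A ⊆ s) (hsV : s ⊆ V) : IsFace 𝕜 s A := by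
  obtain ⟨⟨u, hu⟩, f, rfl⟩ := hA
  have hus : u ∈ exposedFace s f :=
    mem_exposedFace.2 ⟨hAs hu, fun w hw ↦ (mem_exposedFace.1 hu).2 w (hsV hw)⟩
  refine ⟨⟨u, hu⟩, f, Finset.ext fun v ↦ ⟨fun hv ↦ ?_, fun hv ↦ ?_⟩⟩
  · exact (mem_exposedFace_iff_eq hus (hAs hv)).2 (apply_eq_of_mem_exposedFace hv hu)
  · exact (mem_exposedFace_iff_eq hu (hsV (exposedFace_subset hv))).2
      (apply_eq_of_mem_exposedFace hv hus)

theorem vectorSpan_exposedFace_le_ker : vectorSpan 𝕜 (exposedFace V f : Set E) ≤ f.ker :=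
  vectorSpan_le_ker_iff.2 fun _ hv _ hw ↦ apply_eq_of_mem_exposedFace hv hw

variable (𝕜) in
/-- Faces of codimension one. -/
def IsFacet (s A : Finset E) : Prop :=
  IsFace 𝕜 s A ∧ affineDim 𝕜 A + 1 = affineDim 𝕜 s

theorem IsFace.eq_of_affineDim_le [FiniteDimensional 𝕜 E] (hA : IsFace 𝕜 s A)
    (h : affineDim 𝕜 s ≤ affineDim 𝕜 A) :
    A = s := by
  obtain ⟨⟨u, hu⟩, f, rfl⟩ := hA
  have hspan := eq_of_le_of_finrank_le
    (vectorSpan_mono 𝕜 (Finset.coe_subset.2 (exposedFace_subset (V := s) (f := f)))) h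
  have hconst := vectorSpan_le_ker_iff.1 (hspan ▸ vectorSpan_exposedFace_le_ker)
  exact exposedFace_subset.antisymm fun v hv ↦
    (mem_exposedFace_iff_eq hu hv).2 (hconst v hv u (exposedFace_subset hu))

variable (𝕜) in
/-- The closed normal cone of the set `A` of points of `V`: the functionals whose maximum over `V`
is attained on all of `A`. -/
def normalCone (V A : Finset E) : Set (Dual 𝕜 E) :=
  {g | A ⊆ exposedFace V g}

theorem IsFace.normalCone_subset_normalCone_iff (hA : IsFace 𝕜 V A) :
    normalCone 𝕜 V A ⊆ normalCone 𝕜 V B ↔ B ⊆ A := by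
  obtain ⟨-, f, rfl⟩ := hA
  exact ⟨fun h ↦ h (Finset.Subset.refl _), fun h _ hg ↦ h.trans hg⟩

variable (𝕜) in
/-- The `d`-dimensional faces of `V` that remain after the faces in `S` are deleted. -/
def IsRemainingFace (V : Finset E) (S : Finset (Finset E)) (d : ℕ) (p : Finset E) : Prop :=
  IsFace 𝕜 V p ∧ affineDim 𝕜 p = d ∧ p ∉ S

theorem IsRemainingFace.not_subset [FiniteDimensional 𝕜 E] {S : Finset (Finset E)}
    {p X : Finset E} {d : ℕ} (hp : IsRemainingFace 𝕜 V S d p)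
    (hS : ∀ t ∈ S, IsFace 𝕜 V t ∧ affineDim 𝕜 t = d) (hX : X ∈ S) : ¬ X ⊆ p := fun h ↦ by
  have hXp : X = p := ((hS X hX).1.of_subset h hp.1.subset).eq_of_affineDim_le
    (hp.2.1.trans (hS X hX).2.symm).le
  exact hp.2.2 (hXp ▸ hX)

variable [IsStrictOrderedRing 𝕜]

theorem exists_pos_forall_mul_lt {ι : Type*} (s : Finset ι) (a b : ι → 𝕜) :
    ∃ ε : 𝕜, 0 < ε ∧ ∀ i ∈ s, 0 < a i → ε * b i < a i := by
  obtain ⟨M, hM⟩ := (s.image fun i ↦ b i / a i).exists_le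
  have hpos : 0 < |M| + 1 := by positivity
  refine ⟨(|M| + 1)⁻¹, inv_pos.2 hpos, fun i hi ha ↦ (inv_mul_lt_iff₀ hpos).2 ?_⟩
  have hle : b i / a i ≤ M := hM _ (Finset.mem_image_of_mem _ hi)
  exact (div_lt_iff₀ ha).1 (hle.trans_lt ((le_abs_self M).trans_lt (lt_add_one _)))

theorem exists_exposedFace_add_smul (V : Finset E) (f g : Dual 𝕜 E) :
    ∃ ε : 𝕜, 0 < ε ∧ exposedFace V (f + ε • g) = exposedFace (exposedFace V f) g := by
  obtain ⟨ε, hε, hlt⟩ := exists_pos_forall_mul_lt (V ×ˢ V) (fun q ↦ f q.1 - f q.2)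
    (fun q ↦ g q.2 - g q.1)
  replace hlt : ∀ v ∈ V, ∀ w ∈ V, f v < f w → f v + ε * g v < f w + ε * g w := by
    intro v hv w hw hvw
    linarith [hlt (w, v) (Finset.mk_mem_product hw hv) (sub_pos.2 hvw)]
  refine ⟨ε, hε, Finset.ext fun v ↦ ?_⟩
  simp only [mem_exposedFace, LinearMap.add_apply, LinearMap.smul_apply, smul_eq_mul]
  constructor
  · rintro ⟨hv, hmax⟩
    have hvf : ∀ w ∈ V, f w ≤ f v := fun w hw ↦
      le_of_not_gt fun h ↦ (hlt v hv w hw h).not_ge (hmax w hw)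
    refine ⟨⟨hv, hvf⟩, fun w ⟨hw, hwf⟩ ↦ ?_⟩
    have := hmax w hw
    rw [(hvf w hw).antisymm (hwf v hv)] at this
    exact le_of_mul_le_mul_left (le_of_add_le_add_left this) hε
  · rintro ⟨⟨hv, hvf⟩, hvg⟩
    refine ⟨hv, fun w hw ↦ ?_⟩
    rcases (hvf w hw).lt_or_eq with h | h
    · exact (hlt w hw v hv h).le
    · exact add_le_add h.le (mul_le_mul_of_nonneg_left (hvg w ⟨hw, h ▸ hvf⟩) hε.le)

theorem IsFace.trans (hs : IsFace 𝕜 V s) (hA : IsFace 𝕜 s A) : IsFace 𝕜 V A := by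
  obtain ⟨-, f, rfl⟩ := hs
  obtain ⟨hne, g, rfl⟩ := hA
  obtain ⟨ε, -, h⟩ := exists_exposedFace_add_smul V f g
  exact ⟨hne, _, h.symm⟩

theorem IsFace.inter [DecidableEq E] (hA : IsFace 𝕜 V A) (hB : IsFace 𝕜 V B)
    (hAB : (A ∩ B).Nonempty) : IsFace 𝕜 V (A ∩ B) := by
  obtain ⟨-, f, rfl⟩ := hA
  obtain ⟨-, g, rfl⟩ := hB
  refine ⟨hAB, f + g, Finset.ext fun v ↦ ?_⟩
  obtain ⟨u, hu⟩ := hAB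
  simp only [Finset.mem_inter, mem_exposedFace, LinearMap.add_apply] at hu ⊢
  constructor
  · rintro ⟨⟨hv, hvf⟩, -, hvg⟩
    exact ⟨hv, fun w hw ↦ add_le_add (hvf w hw) (hvg w hw)⟩
  · rintro ⟨hv, hmax⟩
    have := hmax u hu.1.1
    have := hu.1.2 v hv
    have := hu.2.2 v hv
    exact ⟨⟨hv, fun w hw ↦ by linarith [hu.1.2 w hw]⟩, hv, fun w hw ↦ by linarith [hu.2.2 w hw]⟩

theorem apply_le_of_mem_convexHull {M : 𝕜} {x : E} (hx : x ∈ convexHull 𝕜 (V : Set E))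
    (hM : ∀ v ∈ V, f v ≤ M) : f x ≤ M :=
  convexHull_min (t := {y | f y ≤ M}) hM (convex_halfSpace_le f.isLinear M) hx

theorem apply_le_of_mem_convexHull_exposedFace {v x : E} (hv : v ∈ V)
    (hx : x ∈ convexHull 𝕜 (exposedFace V f : Set E)) : f v ≤ f x :=
  convexHull_min (t := {y | f v ≤ f y}) (fun _ hu ↦ (mem_exposedFace.1 hu).2 v hv)
    (convex_halfSpace_ge f.isLinear (f v)) hx

theorem mem_convexHull_exposedFace {x : E} (hx : x ∈ convexHull 𝕜 (V : Set E))
    (hmax : ∀ v ∈ V, f v ≤ f x) : x ∈ convexHull 𝕜 (exposedFace V f : Set E) := by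
  obtain ⟨c, hc, hsum, rfl⟩ := Finset.mem_convexHull'.1 hx
  set x := ∑ v ∈ V, c v • v
  have hnonneg : ∀ v ∈ V, 0 ≤ c v * (f x - f v) := fun v hv ↦
    mul_nonneg (hc v hv) (sub_nonneg.2 (hmax v hv))
  have hzero : ∑ v ∈ V, c v * (f x - f v) = 0 := by
    simp only [mul_sub, Finset.sum_sub_distrib, ← Finset.sum_mul, hsum, one_mul]
    simp [x, map_sum]
  have hoff : ∀ v ∈ V, v ∉ exposedFace V f → c v = 0 := fun v hv hvf ↦ by
    refine (mul_eq_zero.1 ((Finset.sum_eq_zero_iff_of_nonneg hnonneg).1 hzero v hv)).resolve_right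
      fun h ↦ hvf (mem_exposedFace.2 ⟨hv, fun w hw ↦ ?_⟩)
    rw [← sub_eq_zero.1 h]
    exact hmax w hw
  refine Finset.mem_convexHull'.2 ⟨c, fun v hv ↦ hc v (exposedFace_subset hv), ?_, ?_⟩
  · rw [← hsum]
    exact Finset.sum_subset exposedFace_subset hoff
  · exact Finset.sum_subset exposedFace_subset fun v hv hvf ↦ by rw [hoff v hv hvf, zero_smul]

theorem IsFace.vectorSpan_normalCone (hA : IsFace 𝕜 V A) :
    vectorSpan 𝕜 (normalCone 𝕜 V A) = (vectorSpan 𝕜 (A : Set E)).dualAnnihilator := by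
  have hle : ∀ g ∈ normalCone 𝕜 V A, g ∈ (vectorSpan 𝕜 (A : Set E)).dualAnnihilator := fun g hg ↦
    (mem_dualAnnihilator g).2 fun _ hv ↦
      vectorSpan_exposedFace_le_ker (vectorSpan_mono 𝕜 (Finset.coe_subset.2 hg) hv)
  refine le_antisymm (span_le.2 ?_) fun g hg ↦ ?_
  · rintro _ ⟨g, hg, g', hg', rfl⟩
    exact sub_mem (hle g hg) (hle g' hg')
  · obtain ⟨-, f, rfl⟩ := hA
    obtain ⟨ε, hε, hface⟩ := exists_exposedFace_add_smul V f g
    have hconst : ∀ v ∈ exposedFace V f, ∀ w ∈ exposedFace V f, g v = g w :=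
      vectorSpan_le_ker_iff.1 fun v hv ↦ (mem_dualAnnihilator g).1 hg v hv
    have hmem : f + ε • g ∈ normalCone 𝕜 V (exposedFace V f) := fun v hv ↦
      hface ▸ mem_exposedFace.2 ⟨hv, fun w hw ↦ (hconst w hw v hv).le⟩
    have hsmul := vsub_mem_vectorSpan 𝕜 hmem (Finset.Subset.refl (exposedFace V f))
    rw [vsub_eq_sub, add_sub_cancel_left] at hsmul
    exact (smul_mem_iff _ hε.ne').1 hsmul

theorem IsFace.finrank_vectorSpan_normalCone_add [FiniteDimensional 𝕜 E] (hA : IsFace 𝕜 V A) :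
    finrank 𝕜 (vectorSpan 𝕜 (normalCone 𝕜 V A)) + affineDim 𝕜 A = finrank 𝕜 E := by
  rw [hA.vectorSpan_normalCone, affineDim, add_comm,
    Subspace.finrank_add_finrank_dualAnnihilator_eq]

theorem exists_separating_dual {v w : E} (h : v ≠ w) : ∃ f : Dual 𝕜 E, f v < f w := by
  obtain ⟨f, hf⟩ : ∃ f : Dual 𝕜 E, f (v - w) ≠ 0 := by
    by_contra! hf
    exact sub_ne_zero.2 h ((Module.forall_dual_apply_eq_zero_iff 𝕜 _).1 hf)
  rw [map_sub, sub_ne_zero] at hf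
  rcases hf.lt_or_gt with hlt | hlt
  · exact ⟨f, hlt⟩
  · exact ⟨-f, neg_lt_neg hlt⟩

theorem tightSet_sub_eq_exposedFace {x : E} {c : 𝕜}
    (hf : IsFeasible s (· - x) (fun _ ↦ c) f)
    (hne : (tightSet s (· - x) (fun _ ↦ c) f).Nonempty) :
    tightSet s (· - x) (fun _ ↦ c) f = exposedFace s f := by
  obtain ⟨u, hu⟩ := hne
  obtain ⟨hus, huc⟩ := mem_tightSet.1 hu
  have hmax : u ∈ exposedFace s f := mem_exposedFace.2 ⟨hus, fun w hw ↦ by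
    have := (hf w hw).trans_eq huc.symm
    simpa using this⟩
  ext v
  rw [mem_tightSet]
  constructor
  · rintro ⟨hv, hvc⟩
    exact (mem_exposedFace_iff_eq hmax hv).2 (by simpa using hvc.trans huc.symm)
  · intro hv
    refine ⟨exposedFace_subset hv, ?_⟩
    rw [← huc, map_sub, map_sub, apply_eq_of_mem_exposedFace hv hmax]

theorem apply_centroid_lt_of_not_subset {X : Finset E} (hX : X.Nonempty) (hXs : X ⊆ s) {u : E}
    (hu : u ∈ exposedFace s f) (h : ¬ X ⊆ exposedFace s f) : f (X.centroid 𝕜 id) < f u := by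
  obtain ⟨v, hv, hvf⟩ := Finset.not_subset.1 h
  have hlt : ∑ v ∈ X, f (v - X.centroid 𝕜 id) < ∑ _ ∈ X, f (u - X.centroid 𝕜 id) := by
    simp only [map_sub]
    refine Finset.sum_lt_sum (fun w hw ↦ sub_le_sub_right ((mem_exposedFace.1 hu).2 w (hXs hw)) _)
      ⟨v, hv, sub_lt_sub_right (((mem_exposedFace.1 hu).2 v (hXs hv)).lt_of_ne fun heq ↦ ?_) _⟩
    exact hvf ((mem_exposedFace_iff_eq hu (hXs hv)).2 heq)
  rw [← map_sum, sum_sub_centroid hX, map_zero, Finset.sum_const, map_sub] at hlt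
  exact sub_pos.1 ((nsmul_pos_iff hX.card_ne_zero).1 hlt)

variable [FiniteDimensional 𝕜 E]

theorem IsFace.exists_isFacet_notMem (hA : IsFace 𝕜 s A) {v : E} (hv : v ∈ s) (hvA : v ∉ A) :
    ∃ B, IsFacet 𝕜 s B ∧ A ⊆ B ∧ v ∉ B := by
  obtain ⟨⟨u, hu⟩, f, rfl⟩ := hA
  have hus := exposedFace_subset hu
  have htight : ∀ z : Dual 𝕜 E, IsFeasible s (· - u) 0 z →
      tightSet s (· - u) 0 z = exposedFace s z := fun z hz ↦
    tightSet_sub_eq_exposedFace (c := 0) hz ⟨u, mem_tightSet.2 ⟨hus, by simp⟩⟩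
  have hf : IsFeasible s (· - u) 0 f := fun w hw ↦ by
    simpa using (mem_exposedFace.1 hu).2 w hw
  have hcs : u - v ∈ span 𝕜 ((· - u) '' (s : Set E)) := by
    rw [← neg_sub]
    exact neg_mem (subset_span (Set.mem_image_of_mem (· - u) hv))
  have hfc : 0 < f (u - v) := by
    rw [map_sub, sub_pos]
    exact ((mem_exposedFace.1 hu).2 v hv).lt_of_ne fun h ↦ hvA ((mem_exposedFace_iff_eq hu hv).2 h)
  obtain ⟨z, hz, hzc, hsub, hrank⟩ := exists_finrank_span_tightSet_add_one hcs hf hfc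
  rw [htight f hf, htight z hz] at hsub
  rw [htight z hz, span_image_sub_eq_vectorSpan (mem_affineSpan 𝕜 (hsub hu)),
    span_image_sub_eq_vectorSpan (mem_affineSpan 𝕜 hus)] at hrank
  refine ⟨exposedFace s z, ⟨isFace_exposedFace ⟨u, hus⟩ z, hrank⟩, hsub, fun hvz ↦ ?_⟩
  rw [map_sub, apply_eq_of_mem_exposedFace (hsub hu) hvz, sub_self] at hzc
  exact hzc.false

theorem exists_isFacet_notMem_of_affineDim_pos {v : E} (hv : v ∈ s) (hs : 0 < affineDim 𝕜 s) :
    ∃ B, IsFacet 𝕜 s B ∧ v ∉ B := by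
  have hnontrivial : (s : Set E).Nontrivial := by
    by_contra h
    rw [affineDim, vectorSpan_of_subsingleton 𝕜 (Set.not_nontrivial_iff.1 h), finrank_bot] at hs
    exact hs.false
  obtain ⟨w, hw, hwv⟩ := hnontrivial.exists_ne v
  obtain ⟨f, hf⟩ := exists_separating_dual (𝕜 := 𝕜) hwv.symm
  obtain ⟨B, hB, -, hvB⟩ := (isFace_exposedFace ⟨v, hv⟩ f).exists_isFacet_notMem hv
    fun h ↦ hf.not_ge ((mem_exposedFace.1 h).2 w hw)
  exact ⟨B, hB, hvB⟩

theorem IsFace.exists_isFacet_not_subset {X : Finset E} (hA : IsFace 𝕜 s A) (hXs : X ⊆ s)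
    (hXA : ¬ X ⊆ A) : ∃ B, IsFacet 𝕜 s B ∧ ¬ X ⊆ B ∧ A ⊆ B := by
  obtain ⟨v, hv, hvA⟩ := Finset.not_subset.1 hXA
  obtain ⟨B, hB, hAB, hvB⟩ := hA.exists_isFacet_notMem (hXs hv) hvA
  exact ⟨B, hB, fun h ↦ hvB (h hv), hAB⟩

theorem IsFacet.isVertexSet {x u : E} (hA : IsFacet 𝕜 s (exposedFace s f))
    (hx : x ∈ affineSpan 𝕜 (s : Set E)) (hu : u ∈ exposedFace s f) (hlt : f x < f u) :
    IsVertexSet s (· - x) (1 : E → 𝕜) (exposedFace s f) := by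
  have hpos : 0 < f (u - x) := by rwa [map_sub, sub_pos]
  have happly : ∀ v, ((f (u - x))⁻¹ • f) (v - x) = (f (u - x))⁻¹ * f (v - x) := fun _ ↦ rfl
  have hfeas : IsFeasible s (· - x) 1 ((f (u - x))⁻¹ • f) := fun v hv ↦ by
    rw [happly, Pi.one_apply, inv_mul_le_one₀ hpos, map_sub, map_sub]
    exact sub_le_sub_right ((mem_exposedFace.1 hu).2 v hv) _
  have htight : exposedFace s f = tightSet s (· - x) 1 ((f (u - x))⁻¹ • f) := by
    ext v
    refine ⟨fun hv ↦ mem_tightSet.2 ⟨exposedFace_subset hv, ?_⟩, fun hv ↦ ?_⟩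
    · rw [happly, map_sub f v, apply_eq_of_mem_exposedFace hv hu, ← map_sub,
        inv_mul_cancel₀ hpos.ne', Pi.one_apply]
    · obtain ⟨hvs, hv⟩ := mem_tightSet.1 hv
      rw [happly, Pi.one_apply, inv_mul_eq_one₀ hpos.ne', map_sub, map_sub, sub_left_inj] at hv
      exact (mem_exposedFace_iff_eq hu hvs).2 hv.symm
  refine ⟨_, hfeas, htight, eq_of_le_of_finrank_le (htight ▸ span_image_tightSet_le) ?_⟩
  rw [finrank_span_image_sub_eq_affineDim_add_one ⟨u, hu⟩
    fun v hv ↦ (mem_tightSet.1 (htight ▸ hv)).2, hA.2, span_image_sub_eq_vectorSpan hx, affineDim]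

theorem IsVertexSet.isFacet {x : E} (hA : IsVertexSet s (· - x) (1 : E → 𝕜) A)
    (hx : x ∈ affineSpan 𝕜 (s : Set E)) (hs : 0 < affineDim 𝕜 s) : IsFacet 𝕜 s A := by
  obtain ⟨α, hα, rfl, hspan⟩ := hA
  set A := tightSet s (· - x) 1 α
  have hrank : finrank 𝕜 (span 𝕜 ((· - x) '' (A : Set E))) = affineDim 𝕜 s := by
    rw [hspan, span_image_sub_eq_vectorSpan hx, affineDim]
  have hne : A.Nonempty := by
    rw [Finset.nonempty_iff_ne_empty]
    rintro h
    rw [h, Finset.coe_empty, Set.image_empty, span_empty, finrank_bot] at hrank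
    exact hs.ne hrank
  refine ⟨⟨hne, α, tightSet_sub_eq_exposedFace (c := 1) hα hne⟩, ?_⟩
  rw [← hrank, finrank_span_image_sub_eq_affineDim_add_one hne fun v hv ↦ (mem_tightSet.1 hv).2]

theorem isVertexSet_centroid_iff {X : Finset E} (hX : X.Nonempty) (hXs : X ⊆ s)
    (hs : 0 < affineDim 𝕜 s) :
    IsVertexSet s (· - X.centroid 𝕜 id) (1 : E → 𝕜) A ↔ IsFacet 𝕜 s A ∧ ¬ X ⊆ A := by
  have hx := centroid_mem_affineSpan_of_subset (𝕜 := 𝕜) hX hXs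
  constructor
  · intro hA
    refine ⟨hA.isFacet hx hs, fun hXA ↦ ?_⟩
    obtain ⟨α, -, rfl, -⟩ := hA
    exact not_forall_apply_sub_centroid_eq_one hX α fun v hv ↦ (mem_tightSet.1 (hXA hv)).2
  · rintro ⟨hA, hXA⟩
    obtain ⟨⟨u, hu⟩, f, rfl⟩ := hA.1
    exact hA.isVertexSet hx hu (apply_centroid_lt_of_not_subset hX hXs hu hXA)

variable (𝕜) in
/-- Adjacency of facets of `s` across a face of codimension two, among the facets that do not
contain `X`. -/
def FacetAdj [DecidableEq E] (s X A B : Finset E) : Prop :=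
  (IsFacet 𝕜 s A ∧ ¬ X ⊆ A) ∧ (IsFacet 𝕜 s B ∧ ¬ X ⊆ B) ∧
    IsFace 𝕜 s (A ∩ B) ∧ affineDim 𝕜 (A ∩ B) + 2 = affineDim 𝕜 s

theorem IsFacet.reflTransGen_facetAdj [DecidableEq E] {X : Finset E} (hX : X.Nonempty)
    (hXs : X ⊆ s) (hs : 2 ≤ affineDim 𝕜 s) (hA : IsFacet 𝕜 s A) (hXA : ¬ X ⊆ A)
    (hB : IsFacet 𝕜 s B) (hXB : ¬ X ⊆ B) : Relation.ReflTransGen (FacetAdj 𝕜 s X) A B := by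
  have hiff : ∀ {C}, IsVertexSet s (· - X.centroid 𝕜 id) (1 : E → 𝕜) C ↔
      IsFacet 𝕜 s C ∧ ¬ X ⊆ C := isVertexSet_centroid_iff hX hXs (by lia)
  have hx := centroid_mem_affineSpan_of_subset (𝕜 := 𝕜) hX hXs
  refine Relation.ReflTransGen.mono ?_ _ _
    ((hiff.2 ⟨hA, hXA⟩).reflTransGen_vertexSetAdj (hiff.2 ⟨hB, hXB⟩))
  rintro C D ⟨hC, hD, hrank⟩
  rw [span_image_sub_eq_vectorSpan hx, ← affineDim] at hrank
  have hne : (C ∩ D).Nonempty := by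
    rw [Finset.nonempty_iff_ne_empty]
    rintro h
    rw [h, Finset.coe_empty, Set.image_empty, span_empty, finrank_bot] at hrank
    lia
  have hCD := (hiff.1 hC).1.1.inter (hiff.1 hD).1.1 hne
  obtain ⟨α, hα, rfl, hspan⟩ := hC
  rw [finrank_span_image_sub_eq_affineDim_add_one hne
    fun v hv ↦ (mem_tightSet.1 (Finset.inter_subset_left hv)).2] at hrank
  exact ⟨hiff.1 ⟨α, hα, rfl, hspan⟩, hiff.1 hD, hCD, hrank⟩

section Balinski

theorem exists_subset_forall_card_filter_le {α : Type*} [DecidableEq α] {S : Finset (Finset α)}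
    {s : Finset α} {m : ℕ} (hS : ∀ t ∈ S, t.Nonempty) (hs : s.Nonempty)
    (hcard : #{t ∈ S | t ⊆ s} ≤ m + 1) :
    ∃ X ⊆ s, X.Nonempty ∧ (X ∈ S ∨ X = s) ∧ ∀ A ⊆ s, ¬ X ⊆ A → #{t ∈ S | t ⊆ A} ≤ m := by
  by_cases h : ∃ X ∈ S, X ⊆ s
  · obtain ⟨X, hXS, hXs⟩ := h
    refine ⟨X, hXs, hS X hXS, .inl hXS, fun A hA hXA ↦ ?_⟩
    have hsub : {t ∈ S | t ⊆ A} ⊆ ({t ∈ S | t ⊆ s}).erase X := by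
      intro t ht
      obtain ⟨htS, htA⟩ := Finset.mem_filter.1 ht
      exact Finset.mem_erase.2
        ⟨fun h ↦ hXA (h ▸ htA), Finset.mem_filter.2 ⟨htS, htA.trans hA⟩⟩
    have hX : X ∈ ({t ∈ S | t ⊆ s} : Finset (Finset α)) := Finset.mem_filter.2 ⟨hXS, hXs⟩
    have hle := Finset.card_le_card hsub
    rw [Finset.card_erase_of_mem hX] at hle
    lia
  · push Not at h
    refine ⟨s, subset_rfl, hs, .inr rfl, fun A hA _ ↦ ?_⟩
    rw [Finset.filter_false_of_mem fun t ht htA ↦ h t ht (htA.trans hA), Finset.card_empty]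
    exact m.zero_le

variable [DecidableEq E] {S : Finset (Finset E)} {p q : Finset E} {d m : ℕ}

variable (𝕜) in
/-- Adjacency of remaining `d`-faces through a `(d + 1)`-face that contains no deleted face. -/
def RemainingFaceAdj (V : Finset E) (S : Finset (Finset E)) (d : ℕ) (p q : Finset E) : Prop :=
  IsRemainingFace 𝕜 V S d p ∧ IsRemainingFace 𝕜 V S d q ∧
    ∃ R, IsFace 𝕜 V R ∧ affineDim 𝕜 R = d + 1 ∧ p ⊆ R ∧ q ⊆ R ∧ ∀ t ∈ S, ¬ t ⊆ R

theorem IsFace.exists_isRemainingFace (hS : ∀ t ∈ S, t.Nonempty) (hs : IsFace 𝕜 V s)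
    (hdim : affineDim 𝕜 s = d + m) (hcard : #{t ∈ S | t ⊆ s} ≤ m) :
    ∃ p ⊆ s, IsRemainingFace 𝕜 V S d p := by
  induction m generalizing s with
  | zero =>
    refine ⟨s, subset_rfl, hs, hdim, fun h ↦ ?_⟩
    exact Finset.filter_eq_empty_iff.1 (Finset.card_eq_zero.1 (Nat.le_zero.1 hcard)) h subset_rfl
  | succ m ih =>
    obtain ⟨X, hXs, ⟨v, hv⟩, -, hX⟩ := exists_subset_forall_card_filter_le hS hs.1 hcard
    obtain ⟨A, ⟨hA, hAdim⟩, hvA⟩ := exists_isFacet_notMem_of_affineDim_pos (𝕜 := 𝕜) (hXs hv)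
      (by lia)
    obtain ⟨p, hpA, hp⟩ := ih (hs.trans hA) (by lia) (hX A hA.subset fun h ↦ hvA (h hv))
    exact ⟨p, hpA.trans hA.subset, hp⟩

theorem IsFace.reflTransGen_remainingFaceAdj (hS : ∀ t ∈ S, IsFace 𝕜 V t ∧ affineDim 𝕜 t = d)
    (hs : IsFace 𝕜 V s) (hdim : affineDim 𝕜 s = d + 1 + m) (hcard : #{t ∈ S | t ⊆ s} ≤ m)
    (hp : IsRemainingFace 𝕜 V S d p) (hps : p ⊆ s) (hq : IsRemainingFace 𝕜 V S d q)
    (hqs : q ⊆ s) : Relation.ReflTransGen (RemainingFaceAdj 𝕜 V S d) p q := by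
  induction m generalizing s p q with
  | zero =>
    refine .single ⟨hp, hq, s, hs, hdim, hps, hqs, fun t ht hts ↦ ?_⟩
    exact Finset.filter_eq_empty_iff.1 (Finset.card_eq_zero.1 (Nat.le_zero.1 hcard)) ht hts
  | succ m ih =>
    obtain ⟨X, hXs, hXne, hXS, hX⟩ :=
      exists_subset_forall_card_filter_le (fun t ht ↦ (hS t ht).1.1) hs.1 hcard
    have hfacet : ∀ {r}, IsRemainingFace 𝕜 V S d r → r ⊆ s →
        ∃ A, IsFacet 𝕜 s A ∧ ¬ X ⊆ A ∧ r ⊆ A := fun hr hrs ↦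
      (hr.1.of_subset hrs hs.subset).exists_isFacet_not_subset hXs <| by
        rcases hXS with hXS | rfl
        · exact hr.not_subset hS hXS
        · rintro h
          rw [← hrs.antisymm h, hr.2.1] at hdim
          lia
    have hwithin : ∀ {A r r'}, IsFacet 𝕜 s A → ¬ X ⊆ A → IsRemainingFace 𝕜 V S d r → r ⊆ A →
        IsRemainingFace 𝕜 V S d r' → r' ⊆ A →
        Relation.ReflTransGen (RemainingFaceAdj 𝕜 V S d) r r' := fun {A r r'} hA hXA ↦
      ih (hs.trans hA.1) (by have := hA.2; lia) (hX A hA.1.subset hXA)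
    obtain ⟨A, hA, hXA, hpA⟩ := hfacet hp hps
    obtain ⟨B, hB, hXB, hqB⟩ := hfacet hq hqs
    have hchain := hA.reflTransGen_facetAdj hXne hXs (by lia) hXA hB hXB
    induction hchain using Relation.ReflTransGen.head_induction_on generalizing p with
    | refl => exact hwithin hB hXB hp hpA hq hqB
    | head hadj _ ihchain =>
      obtain ⟨⟨hA, hXA⟩, ⟨hC, hXC⟩, hAC, hACdim⟩ := hadj
      obtain ⟨r, hr, hrem⟩ := (hs.trans hAC).exists_isRemainingFace (d := d) (m := m)
        (fun t ht ↦ (hS t ht).1.1) (by lia)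
        (hX _ hAC.subset fun h ↦ hXA (h.trans Finset.inter_subset_left))
      obtain ⟨hrA, hrC⟩ := Finset.subset_inter_iff.1 hr
      exact (hwithin hA hXA hp hpA hrem hrA).trans
        (ihchain hrem (hrC.trans hC.1.subset) hC hXC hrC)

end Balinski

end Faces

section NormalFan

variable {n k d : ℕ} {V A B : Finset (Fin n → ℝ)} {G : Finset (Set (Fin n → ℝ))}
  {C : PolyhedralComplex n}

/-- The normal cone of `A` in `V`, transported to `ℝ^n` along the dot product. -/
def dotNormalCone (V A : Finset (Fin n → ℝ)) : Set (Fin n → ℝ) :=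
  dotProductEquiv ℝ (Fin n) ⁻¹' normalCone ℝ V A

theorem maxFace_convexHull (V : Finset (Fin n → ℝ)) (w : Fin n → ℝ) :
    maxFace (convexHull ℝ (V : Set (Fin n → ℝ))) w =
      convexHull ℝ (exposedFace V (dotProductEquiv ℝ (Fin n) w) : Set (Fin n → ℝ)) := by
  ext x
  constructor
  · rintro ⟨hx, hmax⟩
    exact mem_convexHull_exposedFace hx fun v hv ↦ hmax v (subset_convexHull ℝ _ hv)
  · intro hx
    refine ⟨convexHull_mono (Finset.coe_subset.2 exposedFace_subset) hx, fun y hy ↦ ?_⟩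
    exact apply_le_of_mem_convexHull (f := dotProductEquiv ℝ (Fin n) w) hy fun v hv ↦
      apply_le_of_mem_convexHull_exposedFace hv hx

theorem normalFanCone_convexHull (V : Finset (Fin n → ℝ)) (w : Fin n → ℝ) :
    normalFanCone (convexHull ℝ (V : Set (Fin n → ℝ))) w =
      dotNormalCone V (exposedFace V (dotProductEquiv ℝ (Fin n) w)) := by
  ext u
  rw [normalFanCone, Set.mem_ofPred_eq, maxFace_convexHull V u]
  constructor
  · intro h v hv
    have hvu := h (maxFace_convexHull V w ▸ subset_convexHull ℝ _ hv)
    exact mem_exposedFace.2 ⟨exposedFace_subset hv, fun v' hv' ↦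
      apply_le_of_mem_convexHull_exposedFace hv' hvu⟩
  · intro h
    rw [maxFace_convexHull]
    exact convexHull_mono (Finset.coe_subset.2 h)

theorem polyDim_dotNormalCone (V A : Finset (Fin n → ℝ)) :
    polyDim (dotNormalCone V A) = finrank ℝ (vectorSpan ℝ (normalCone ℝ V A)) := by
  have hmap := (dotProductEquiv ℝ (Fin n)).symm.toLinearMap.toAffineMap.map_vectorSpan
    (s := normalCone ℝ V A)
  rw [LinearMap.coe_toAffineMap, LinearEquiv.coe_coe, LinearEquiv.image_symm_eq_preimage] at hmap
  rw [polyDim, dotNormalCone, ← hmap]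
  exact LinearEquiv.finrank_map_eq (dotProductEquiv ℝ (Fin n)).symm _

theorem IsFace.polyDim_dotNormalCone_add (hA : IsFace ℝ V A) :
    polyDim (dotNormalCone V A) + affineDim ℝ A = n := by
  rw [polyDim_dotNormalCone, hA.finrank_vectorSpan_normalCone_add, finrank_fin_fun]

theorem IsFace.dotNormalCone_subset_dotNormalCone_iff (hA : IsFace ℝ V A) :
    dotNormalCone V A ⊆ dotNormalCone V B ↔ B ⊆ A :=
  (dotProductEquiv ℝ (Fin n)).surjective.preimage_subset_preimage_iff.trans
    hA.normalCone_subset_normalCone_iff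

theorem injOn_dotNormalCone : Set.InjOn (dotNormalCone V) {A | IsFace ℝ V A} :=
  fun _ hA _ hB h ↦ (hB.dotNormalCone_subset_dotNormalCone_iff.1 h.ge).antisymm
    (hA.dotNormalCone_subset_dotNormalCone_iff.1 h.le)

theorem polyDim_convexHull (V : Finset (Fin n → ℝ)) :
    polyDim (convexHull ℝ (V : Set (Fin n → ℝ))) = affineDim ℝ V := by
  rw [polyDim, affineDim, ← direction_affineSpan, affineSpan_convexHull, direction_affineSpan]

open scoped Classical in
/-- The faces of `V` whose normal cones lie in `G`. -/
noncomputable def facesOfCones (V : Finset (Fin n → ℝ)) (G : Finset (Set (Fin n → ℝ))) :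
    Finset (Finset (Fin n → ℝ)) :=
  {A ∈ V.powerset | IsFace ℝ V A ∧ dotNormalCone V A ∈ G}

theorem mem_facesOfCones : A ∈ facesOfCones V G ↔ IsFace ℝ V A ∧ dotNormalCone V A ∈ G := by
  simp only [facesOfCones, Finset.mem_filter, Finset.mem_powerset, and_iff_right_iff_imp]
  exact fun h ↦ h.1.subset

theorem card_facesOfCones_le (V : Finset (Fin n → ℝ)) (G : Finset (Set (Fin n → ℝ))) :
    #(facesOfCones V G) ≤ #G :=
  Finset.card_le_card_of_injOn (dotNormalCone V) (fun _ hA ↦ (mem_facesOfCones.1 hA).2)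
    (injOn_dotNormalCone.mono fun _ hA ↦ (mem_facesOfCones.1 hA).1)

/-- `C` consists of the cones of dimension at most `k` of the normal fan of `P`. -/
def IsNormalFanSkeleton (P : Set (Fin n → ℝ)) (k : ℕ) (C : PolyhedralComplex n) : Prop :=
  C.faces = {σ | ∃ w : Fin n → ℝ, σ = normalFanCone P w ∧ polyDim (normalFanCone P w) ≤ k}

namespace IsNormalFanSkeleton

theorem dotNormalCone_mem_faces
    (hC : IsNormalFanSkeleton (convexHull ℝ (V : Set (Fin n → ℝ))) k C) (hA : IsFace ℝ V A)
    (hk : n ≤ k + affineDim ℝ A) : dotNormalCone V A ∈ C.faces := by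
  have hdim := hA.polyDim_dotNormalCone_add
  obtain ⟨-, f, rfl⟩ := hA
  obtain ⟨w, rfl⟩ := (dotProductEquiv ℝ (Fin n)).surjective f
  rw [hC]
  exact ⟨w, (normalFanCone_convexHull V w).symm, by rw [normalFanCone_convexHull]; lia⟩

theorem exists_isFace_of_mem_facets
    (hC : IsNormalFanSkeleton (convexHull ℝ (V : Set (Fin n → ℝ))) k C) (hV : V.Nonempty)
    {σ : Set (Fin n → ℝ)} (hσ : σ ∈ C.facets k) :
    ∃ A, IsFace ℝ V A ∧ k + affineDim ℝ A = n ∧ dotNormalCone V A = σ := by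
  obtain ⟨hσC, hdim⟩ := hσ
  rw [hC] at hσC
  obtain ⟨w, rfl, -⟩ := hσC
  have hA := isFace_exposedFace hV (dotProductEquiv ℝ (Fin n) w)
  rw [normalFanCone_convexHull] at hdim ⊢
  exact ⟨_, hA, hdim ▸ hA.polyDim_dotNormalCone_add, rfl⟩

theorem dotNormalCone_mem_facets
    (hC : IsNormalFanSkeleton (convexHull ℝ (V : Set (Fin n → ℝ))) k C) (hkd : k + d = n)
    (hA : IsRemainingFace ℝ V (facesOfCones V G) d A) :
    dotNormalCone V A ∈ C.facets k ∧ dotNormalCone V A ∉ G := by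
  have hdim := hA.1.polyDim_dotNormalCone_add
  rw [hA.2.1] at hdim
  exact ⟨⟨hC.dotNormalCone_mem_faces hA.1 (by rw [hA.2.1, hkd]), by lia⟩,
    fun hG ↦ hA.2.2 (mem_facesOfCones.2 ⟨hA.1, hG⟩)⟩

theorem adj_dotNormalCone
    (hC : IsNormalFanSkeleton (convexHull ℝ (V : Set (Fin n → ℝ))) k C) (hV : V.Nonempty)
    (hG : ↑G ⊆ C.facets k) (hkd : k + d = n)
    (hAB : RemainingFaceAdj ℝ V (facesOfCones V G) d A B) :
    C.Adj k G (dotNormalCone V A) (dotNormalCone V B) := by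
  obtain ⟨hA, hB, R, hR, hdim, hAR, hBR, hRG⟩ := hAB
  obtain ⟨hAC, hAG⟩ := hC.dotNormalCone_mem_facets hkd hA
  obtain ⟨hBC, hBG⟩ := hC.dotNormalCone_mem_facets hkd hB
  have hRdim := hR.polyDim_dotNormalCone_add
  refine ⟨hAC, hBC, hAG, hBG, dotNormalCone V R,
    ⟨hC.dotNormalCone_mem_faces hR (by lia), by lia⟩,
    hR.dotNormalCone_subset_dotNormalCone_iff.2 hAR,
    hR.dotNormalCone_subset_dotNormalCone_iff.2 hBR, fun σ hσ hRσ ↦ ?_⟩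
  obtain ⟨T, hT, -, rfl⟩ := hC.exists_isFace_of_mem_facets hV (hG hσ)
  exact hRG T (mem_facesOfCones.2 ⟨hT, hσ⟩) (hR.dotNormalCone_subset_dotNormalCone_iff.1 hRσ)

end IsNormalFanSkeleton

end NormalFan

/-- The lineality space common to all the cones has dimension `n - polyDim P`, so only the remaining
`k - (n - polyDim P)` dimensions of a `k`-cone count. -/
theorem skeleton_normal_fan_connected_general {n k : ℕ} (V : Finset (Fin n → ℝ))
    (hV : V.Nonempty) (C : PolyhedralComplex n)
    (hC : IsNormalFanSkeleton (convexHull ℝ (V : Set (Fin n → ℝ))) k C) :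
    C.ConnectedThroughCodimOne k (k - (n - polyDim (convexHull ℝ (V : Set (Fin n → ℝ))))) := by
  classical
  intro G hG hcard σ hσ τ hτ hσG hτG
  obtain ⟨A, hA, hAk, rfl⟩ := hC.exists_isFace_of_mem_facets hV hσ
  obtain ⟨B, hB, hBk, rfl⟩ := hC.exists_isFace_of_mem_facets hV hτ
  have hle := (isFace_self (𝕜 := ℝ) hV).polyDim_dotNormalCone_add
  rw [polyDim_convexHull] at hcard
  obtain ⟨m, hm⟩ : ∃ m, affineDim ℝ V = n - k + 1 + m := Nat.exists_eq_add_of_le (by lia)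
  have hS : ∀ T ∈ facesOfCones V G, IsFace ℝ V T ∧ affineDim ℝ T = n - k := fun T hT ↦ by
    obtain ⟨hT, hTG⟩ := mem_facesOfCones.1 hT
    have hTk : polyDim (dotNormalCone V T) = k := (hG hTG).2
    exact ⟨hT, by have := hT.polyDim_dotNormalCone_add; lia⟩
  have hpath : Relation.ReflTransGen (RemainingFaceAdj ℝ V (facesOfCones V G) (n - k)) A B :=
    (isFace_self hV).reflTransGen_remainingFaceAdj hS hm
      ((Finset.card_filter_le _ _).trans ((card_facesOfCones_le V G).trans (by lia)))
      ⟨hA, by lia, fun h ↦ hσG (mem_facesOfCones.1 h).2⟩ hA.subset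
      ⟨hB, by lia, fun h ↦ hτG (mem_facesOfCones.1 h).2⟩ hB.subset
  exact hpath.lift (dotNormalCone V) fun _ _ ↦ hC.adj_dotNormalCone hV hG (by lia)

/-- the `k`-dimensional skeleton of the normal fan of a rational
full-dimensional polytope `P ⊂ ℝ^n` is `k`-connected through codimension one. -/
theorem skeleton_normal_fan_connected
    {n k : ℕ} (hk : 1 ≤ k) (hkn : k ≤ n)
    (V : Finset (Fin n → ℚ)) (P : Set (Fin n → ℝ))
    (hP : P = convexHull ℝ
      ((fun v : Fin n → ℚ => fun i => (v i : ℝ)) '' (V : Set (Fin n → ℚ))))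
    (hfull : affineSpan ℝ P = ⊤)
    (C : PolyhedralComplex n)
    (hfaces : C.faces = {S | ∃ w : Fin n → ℝ,
      S = normalFanCone P w ∧ polyDim (normalFanCone P w) ≤ k}) :
    C.ConnectedThroughCodimOne k k := by
  have himage : P = convexHull ℝ (V.image fun v i ↦ (v i : ℝ) : Finset (Fin n → ℝ)) := by
    rw [hP, Finset.coe_image]
  have hne : P.Nonempty := (affineSpan_nonempty ℝ).1 (hfull ▸ Set.univ_nonempty)
  have hdim : polyDim P = n := by
    rw [polyDim, ← direction_affineSpan, hfull, AffineSubspace.direction_top, finrank_top,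
      finrank_fin_fun]
  subst himage
  have hV := Finset.coe_nonempty.1 (convexHull_nonempty_iff.1 hne)
  simpa only [hdim, Nat.sub_self, Nat.sub_zero] using
    skeleton_normal_fan_connected_general _ hV C hfaces
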